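/- Let D be a non-trivial, non-symmetric 2-(v,k,3) design with 3 dividing r, admitting a flag-transitive, point-primitive automorphism group G that is almost simple with socle X = PSL(2,q), where X acts point-primitively on D with point stabilizer X_α maximal in X. Suppose X_α ≅ C_p^f ⋊ C_{(q−1)/gcd(2,q−1)} is the stabilizer of a point in the natural action of X on PG(1,q), where q = p^f, so that v = q+1. Then one of the following holds: (1) q = 4, D is the complete 2-(5,3,3) design and PSL(2,4) ⊴ G ≤ PΓL(2,4); (2) q = 25, D is the 2-(26,6,3) design whose blocks form one PSL(2,25)-orbit of Baer sublines PG(1,5) of PG(1,25), and PSL(2,25) ⊴ G ≤ PΣL(2,25). -/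

import Mathlib

/-!
The translations in the Borel subgroup form a normal `p`-subgroup. Since `q + 1` is prime to `p` and
a nontrivial `p`-element of `PSL(2,q)` fixes at most one point of the line, the image of this
subgroup under any embedding of the Borel subgroup in `PSL(2,q)` fixes exactly one point, which the
whole image then fixes. So `X_α` is the stabilizer of a point of the line, and the design may be
moved to `PG(1,q)`.

There `r (k - 1) = 3 q` and `3 ∣ r` give `k - 1 ∣ q`. The homotheties `x ↦ a² x` permute the three
blocks through `0` and `∞`. If the orbit of such a block has length `e ≤ 3`, then the `e`-th powers
of the homotheties fix the block, so its nonzero coordinates form a union of cosets of the group of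
`2e`-th powers, and `q - 1` divides `gcd (q - 1, 2e) (k - 2)`. Together with `k - 1 ∣ q` this leaves
`(q, k) = (4, 3)`, `(9, 4)` and `(25, 6)`. In the first case the number of blocks through two points
forces every triple to be a block, and in the second the number of blocks would not be an integer.

In the third case `e = 3`, so the nonzero coordinates form a single coset `c 𝔽₅ˣ` and the block is
a Baer subline; since homotheties are transitive on the blocks through `0` and `∞`, the blocks form
one orbit of `PSL(2,25)`. An element of `G` normalizes `PSL(2,25)` and, modulo `PSL(2,25)`, fixes
`0`, `∞` and the block. Normalizing the stabilizer of `∞` it is additive on the affine line, and up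
to a scalar it commutes with multiplication by squares; as every element of the field is a
difference of two squares, it is `x ↦ a σ(x)` for a field automorphism `σ`. Now `a σ(c) ∈ c 𝔽₅ˣ`,
where both `𝔽₅ˣ` and `c / σ(c)` consist of squares, so `a` is a square and the element lies in
`PΣL(2,25)`.
-/

open scoped Pointwise
open Matrix Projectivization

noncomputable section

namespace FT

variable (F : Type) [Field F]

/-- The projective line `PG(1,q)` over a field `F`. -/
abbrev PG1 := Projectivization F (Fin 2 → F)

/-- The semilinear bijection of `F²` attached to a field automorphism `σ` and a
matrix `g ∈ GL(2,F)`, namely `v ↦ g ⬝ (σ ∘ v)`. -/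
def semilinearAux (σ : F ≃+* F) (g : GL (Fin 2) F) :
    (Fin 2 → F) →ₛₗ[(σ : F →+* F)] (Fin 2 → F) where
  toFun v := (g : Matrix (Fin 2) (Fin 2) F).mulVec (fun i => σ (v i))
  map_add' v w := show (g : Matrix (Fin 2) (Fin 2) F).mulVec (fun i => σ ((v + w) i)) =
      (g : Matrix (Fin 2) (Fin 2) F).mulVec (fun i => σ (v i)) +
        (g : Matrix (Fin 2) (Fin 2) F).mulVec (fun i => σ (w i)) by
    have h1 : (fun i => σ ((v + w) i)) = (fun i => σ (v i)) + (fun i => σ (w i)) := by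
      funext i; simp
    rw [h1, Matrix.mulVec_add]
  map_smul' c v := show (g : Matrix (Fin 2) (Fin 2) F).mulVec (fun i => σ ((c • v) i)) =
      σ c • (g : Matrix (Fin 2) (Fin 2) F).mulVec (fun i => σ (v i)) by
    have h1 : (fun i => σ ((c • v) i)) = σ c • (fun i => σ (v i)) := by
      funext i; simp [mul_comm]
    rw [h1, Matrix.mulVec_smul]

lemma semilinearAux_apply (σ : F ≃+* F) (g : GL (Fin 2) F) (v : Fin 2 → F) :
    semilinearAux F σ g v = (g : Matrix (Fin 2) (Fin 2) F).mulVec (fun i => σ (v i)) := rfl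

lemma coe_unitsMap (σ : F →+* F) (g : GL (Fin 2) F) :
    ((Units.map σ.mapMatrix.toMonoidHom g : GL (Fin 2) F) : Matrix (Fin 2) (Fin 2) F) =
      (g : Matrix (Fin 2) (Fin 2) F).map σ := rfl

lemma semilinearAux_injective (σ : F ≃+* F) (g : GL (Fin 2) F) :
    Function.Injective (semilinearAux F σ g) := by
  intro v w h
  letI := g.invertible
  have hinj : Function.Injective ((g : Matrix (Fin 2) (Fin 2) F).mulVec) :=
    Matrix.mulVec_injective_of_invertible _
  have h' : (g : Matrix (Fin 2) (Fin 2) F).mulVec (fun i => σ (v i)) =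
      (g : Matrix (Fin 2) (Fin 2) F).mulVec (fun i => σ (w i)) := h
  have h2 := hinj h'
  funext i
  exact σ.injective (congrFun h2 i)

lemma semilinearAux_cancel (σ : F ≃+* F) (g : GL (Fin 2) F) (v : Fin 2 → F) :
    semilinearAux F σ.symm (Units.map (σ.symm : F →+* F).mapMatrix.toMonoidHom g⁻¹)
      (semilinearAux F σ g v) = v := by
  simp only [semilinearAux_apply, coe_unitsMap]
  have h1 : (fun i => σ.symm (((g : Matrix (Fin 2) (Fin 2) F).mulVec
      (fun i => σ (v i))) i)) = ((g : Matrix (Fin 2) (Fin 2) F).map (σ.symm : F →+* F)).mulVec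
        (fun i => σ.symm (σ (v i))) := by
    funext i
    exact RingHom.map_mulVec (σ.symm : F →+* F) _ _ i
  rw [h1]
  simp only [RingEquiv.symm_apply_apply]
  rw [Matrix.mulVec_mulVec, ← Matrix.map_mul]
  have hgg : ((g⁻¹ : GL (Fin 2) F) : Matrix (Fin 2) (Fin 2) F) *
      ((g : GL (Fin 2) F) : Matrix (Fin 2) (Fin 2) F) = 1 := by
    rw [← Units.val_mul, inv_mul_cancel g, Units.val_one]
  rw [hgg, Matrix.map_one _ (map_zero _) (map_one _), Matrix.one_mulVec]

lemma semilinearAux_cancel' (σ : F ≃+* F) (g : GL (Fin 2) F) (v : Fin 2 → F) :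
    semilinearAux F σ g
      (semilinearAux F σ.symm (Units.map (σ.symm : F →+* F).mapMatrix.toMonoidHom g⁻¹) v) = v := by
  simp only [semilinearAux_apply, coe_unitsMap]
  have h1 : (fun i => σ ((((g⁻¹ : GL (Fin 2) F) : Matrix (Fin 2) (Fin 2) F).map
      (σ.symm : F →+* F)).mulVec (fun i => σ.symm (v i)) i)) =
      ((((g⁻¹ : GL (Fin 2) F) : Matrix (Fin 2) (Fin 2) F).map (σ.symm : F →+* F)).map
        (σ : F →+* F)).mulVec (fun i => σ (σ.symm (v i))) := by
    funext i
    exact RingHom.map_mulVec (σ : F →+* F) _ _ i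
  rw [h1]
  simp only [RingEquiv.apply_symm_apply]
  rw [Matrix.map_map]
  have h2 : ((σ : F →+* F) : F → F) ∘ ((σ.symm : F →+* F) : F → F) = id := by
    funext x; simp
  rw [h2, Matrix.map_id, Matrix.mulVec_mulVec]
  have hgg : ((g : GL (Fin 2) F) : Matrix (Fin 2) (Fin 2) F) *
      ((g⁻¹ : GL (Fin 2) F) : Matrix (Fin 2) (Fin 2) F) = 1 := by
    rw [← Units.val_mul, mul_inv_cancel g, Units.val_one]
  rw [hgg, Matrix.one_mulVec]

/-- The permutation of the projective line `PG(1,F)` induced by the projective semilinear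
transformation with companion field automorphism `σ` and matrix `g ∈ GL(2,F)`. -/
def projSemilinear (σ : F ≃+* F) (g : GL (Fin 2) F) : Equiv.Perm (PG1 F) where
  toFun := Projectivization.map (semilinearAux F σ g) (semilinearAux_injective F σ g)
  invFun := Projectivization.map
    (semilinearAux F σ.symm (Units.map (σ.symm : F →+* F).mapMatrix.toMonoidHom g⁻¹))
    (semilinearAux_injective F _ _)
  left_inv := by
    intro p
    induction p using Projectivization.ind with
    | h v hv =>
      rw [Projectivization.map_mk, Projectivization.map_mk, Projectivization.mk_eq_mk_iff]
      exact ⟨1, by rw [one_smul]; exact (semilinearAux_cancel F σ g v).symm⟩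
  right_inv := by
    intro p
    induction p using Projectivization.ind with
    | h v hv =>
      rw [Projectivization.map_mk, Projectivization.map_mk, Projectivization.mk_eq_mk_iff]
      exact ⟨1, by rw [one_smul]; exact (semilinearAux_cancel' F σ g v).symm⟩

/-- `PGL(2,F)` as a group of permutations of the projective line. -/
def PGLsub : Subgroup (Equiv.Perm (PG1 F)) :=
  Subgroup.closure {e | ∃ g : GL (Fin 2) F, e = projSemilinear F (RingEquiv.refl F) g}

/-- `PSL(2,F)` as a group of permutations of the projective line. -/
def PSLsub : Subgroup (Equiv.Perm (PG1 F)) :=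
  Subgroup.closure {e | ∃ s : Matrix.SpecialLinearGroup (Fin 2) F,
    e = projSemilinear F (RingEquiv.refl F) (Matrix.SpecialLinearGroup.toGL s)}

/-- `PΣL(2,F)` as a group of permutations of the projective line. -/
def PSigmaLsub : Subgroup (Equiv.Perm (PG1 F)) :=
  Subgroup.closure {e | ∃ (σ : F ≃+* F) (s : Matrix.SpecialLinearGroup (Fin 2) F),
    e = projSemilinear F σ (Matrix.SpecialLinearGroup.toGL s)}

/-- `PΓL(2,F)` as a group of permutations of the projective line. -/
def PGammaLsub : Subgroup (Equiv.Perm (PG1 F)) :=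
  Subgroup.closure {e | ∃ (σ : F ≃+* F) (g : GL (Fin 2) F), e = projSemilinear F σ g}

/-- The canonical subline of `PG(1,F)` determined by a subfield `K` of `F`: the set of points
admitting homogeneous coordinates in `K`. -/
def canonicalSubline (K : Subfield F) : Set (PG1 F) :=
  {p | ∃ (v : Fin 2 → F) (hv : v ≠ 0), (∀ i, v i ∈ K) ∧ p = Projectivization.mk F v hv}

/-- A subset of `PG(1,F)` is a (`K`-)Baer subline if it is the image of the canonical subline
over `K` under an element of `PGL(2,F)`. -/
def IsBaerSubline (K : Subfield F) (s : Set (PG1 F)) : Prop :=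
  ∃ g : GL (Fin 2) F, s = (projSemilinear F (RingEquiv.refl F) g) '' canonicalSubline F K

end FT
end

namespace FT

variable {Pt : Type*}

/-- `IsDesign 𝓑 k lam` says that the family `𝓑` of subsets of the point set `Pt` is the
block set of a `2-(v, k, lam)` design: every block has `k` points and any two distinct
points lie on exactly `lam` common blocks. -/
structure IsDesign (𝓑 : Set (Set Pt)) (k lam : ℕ) : Prop where
  block_card : ∀ B ∈ 𝓑, Nat.card B = k
  pair_count : ∀ x y : Pt, x ≠ y → Nat.card {B : Set Pt | B ∈ 𝓑 ∧ x ∈ B ∧ y ∈ B} = lam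

/-- The group `G` acts on the design with point set `Pt` and block set `𝓑` as a group of
automorphisms. -/
def ActsOn (G : Type*) [Group G] [MulAction G Pt] (𝓑 : Set (Set Pt)) : Prop :=
  ∀ (g : G), ∀ B ∈ 𝓑, g • B ∈ 𝓑

/-- The group `G` is transitive on the flags (incident point-block pairs) of the design. -/
def FlagTransitive (G : Type*) [Group G] [MulAction G Pt] (𝓑 : Set (Set Pt)) : Prop :=
  ∀ B ∈ 𝓑, ∀ C ∈ 𝓑, ∀ x ∈ B, ∀ y ∈ C, ∃ g : G, g • B = C ∧ g • x = y

/-- The action of `G` on `Pt` is primitive: it is transitive and every block of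
imprimitivity is trivial. -/
def PointPrimitive (G : Type*) [Group G] (Pt : Type*) [MulAction G Pt] : Prop :=
  MulAction.IsPretransitive G Pt ∧
    ∀ s : Set Pt, MulAction.IsBlock G s → s.Subsingleton ∨ s = Set.univ

/-- The number of blocks of `𝓑` through the point `x` (the replication number, for a
flag-transitive design). -/
noncomputable def repNum (𝓑 : Set (Set Pt)) (x : Pt) : ℕ :=
  Nat.card {B : Set Pt | B ∈ 𝓑 ∧ x ∈ B}

/-- The projective general linear group `PGL(2,K)`, as the quotient of `GL(2,K)` by its
center. -/
abbrev PGL2 (K : Type*) [Field K] :=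
  GL (Fin 2) K ⧸ Subgroup.center (GL (Fin 2) K)

/-- The projective special linear group `PSL(2,K)`. -/
abbrev PSL2 (K : Type*) [Field K] := Matrix.ProjectiveSpecialLinearGroup (Fin 2) K

end FT

open FT

namespace FT

section Design

variable {P Q : Type*} {𝓑 : Set (Set P)} {k lam : ℕ}

/-- The blocks of `𝓑` through both `x` and `y`. -/
def blocksThrough (𝓑 : Set (Set P)) (x y : P) : Set (Set P) :=
  {B | B ∈ 𝓑 ∧ x ∈ B ∧ y ∈ B}

lemma card_mul_eq_card_mul_of_relation {A B : Type*} [Finite A] [Finite B] {R : A → B → Prop}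
    {m n : ℕ} (hm : ∀ a, Nat.card {b // R a b} = m) (hn : ∀ b, Nat.card {a // R a b} = n) :
    Nat.card A * m = Nat.card B * n := by
  classical
  have := Fintype.ofFinite A
  have := Fintype.ofFinite B
  simp only [Nat.card_eq_fintype_card, Fintype.card_subtype] at hm hn ⊢
  exact Finset.card_mul_eq_card_mul R (s := .univ) (t := .univ) (fun a _ => hm a) fun b _ => hn b

lemma IsDesign.repNum_mul [Finite P] (hD : IsDesign 𝓑 k lam) (x : P) :
    repNum 𝓑 x * (k - 1) = (Nat.card P - 1) * lam := by
  have hpoints : Nat.card {y // y ≠ x} = Nat.card P - 1 := by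
    classical
    have := Fintype.ofFinite P
    simp
  rw [← hpoints]
  refine card_mul_eq_card_mul_of_relation (A := {B : Set P | B ∈ 𝓑 ∧ x ∈ B})
    (R := fun B y => y.1 ∈ B.1) (fun B => ?_) fun y => ?_
  · rw [← hD.block_card B.1 B.2.1, Nat.card_coe_set_eq, ← Set.ncard_sdiff_singleton_of_mem B.2.2,
      ← Nat.card_coe_set_eq]
    exact Nat.card_congr <| (Equiv.subtypeSubtypeEquivSubtypeInter (· ≠ x) (· ∈ B.1)).trans <|
      Equiv.subtypeEquivRight fun y => and_comm
  · rw [← hD.pair_count x y y.2.symm]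
    exact Nat.card_congr <| (Equiv.subtypeSubtypeEquivSubtypeInter
      (fun B => B ∈ 𝓑 ∧ x ∈ B) (y.1 ∈ ·)).trans <| Equiv.subtypeEquivRight fun B => and_assoc

lemma IsDesign.dvd_card_sub_one [Finite P] (hD : IsDesign 𝓑 k lam) (hlam : 0 < lam) {x : P}
    (hx : lam ∣ repNum 𝓑 x) : k - 1 ∣ Nat.card P - 1 := by
  obtain ⟨s, hs⟩ := hx
  refine ⟨s, Nat.eq_of_mul_eq_mul_right hlam ?_⟩
  rw [← hD.repNum_mul x, hs]
  ring

lemma IsDesign.card_blocks_mul [Finite P] (hD : IsDesign 𝓑 k lam) (hk : 1 < k) :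
    Nat.card 𝓑 * (k * (k - 1)) = Nat.card P * ((Nat.card P - 1) * lam) := by
  rcases isEmpty_or_nonempty P with hP | ⟨⟨x⟩⟩
  · have : IsEmpty 𝓑 := ⟨fun B => by
      have hzero := hD.block_card B B.2
      rw [Nat.card_of_isEmpty] at hzero
      omega⟩
    simp
  have hr (y : P) : repNum 𝓑 y = repNum 𝓑 x :=
    Nat.eq_of_mul_eq_mul_right (Nat.sub_pos_of_lt hk) <|
      (hD.repNum_mul y).trans (hD.repNum_mul x).symm
  rw [← hD.repNum_mul x, ← mul_assoc, ← mul_assoc]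
  congr 1
  exact card_mul_eq_card_mul_of_relation (R := fun (B : 𝓑) y => y ∈ B.1)
    (fun B => hD.block_card B B.2) fun y =>
      (Nat.card_congr <| Equiv.subtypeSubtypeEquivSubtypeInter (· ∈ 𝓑) (y ∈ ·)).trans (hr y)

lemma IsDesign.mem_iff_card_eq_three [Finite P] (hD : IsDesign 𝓑 3 (Nat.card P - 2))
    (B : Set P) : B ∈ 𝓑 ↔ Nat.card B = 3 := by
  refine ⟨hD.block_card B, fun hB => ?_⟩
  obtain ⟨x, y, z, hxy, hxz, hyz, rfl⟩ :=
    Set.ncard_eq_three.1 ((Nat.card_coe_set_eq B).symm.trans hB)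
  have hsub : blocksThrough 𝓑 x y ⊆ (fun w => {x, y, w}) '' ({x, y}ᶜ : Set P) := by
    rintro C ⟨hC, hx, hy⟩
    have hpair : ({x, y} : Set P) ⊆ C := Set.insert_subset hx (Set.singleton_subset_iff.2 hy)
    have hrest : (C \ {x, y}).ncard = 1 := by
      rw [Set.ncard_sdiff hpair, ← Nat.card_coe_set_eq, hD.block_card C hC, Set.ncard_pair hxy]
    obtain ⟨w, hw⟩ := Set.ncard_eq_one.1 hrest
    refine ⟨w, (hw.symm.subset rfl).2, ?_⟩
    rw [← Set.union_sdiff_cancel hpair, hw]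
    simp only [Set.insert_union, Set.singleton_union]
  have hcard : ((fun w => ({x, y, w} : Set P)) '' {x, y}ᶜ).ncard ≤ (blocksThrough 𝓑 x y).ncard := by
    rw [← Nat.card_coe_set_eq (blocksThrough 𝓑 x y)]
    refine (Set.ncard_image_le (Set.toFinite _)).trans ?_
    rw [Set.ncard_compl, Set.ncard_pair hxy]
    exact (hD.pair_count x y hxy).ge
  refine ((Set.eq_of_subset_of_ncard_le hsub hcard).symm.subset ⟨z, ?_, rfl⟩).1
  simp [hxz.symm, hyz.symm]

lemma IsDesign.image (hD : IsDesign 𝓑 k lam) (e : P ≃ Q) :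
    IsDesign (Set.image e '' 𝓑) k lam where
  block_card := by
    rintro _ ⟨B, hB, rfl⟩
    rw [Nat.card_image_of_injective e.injective, hD.block_card B hB]
  pair_count x y hxy := by
    rw [← hD.pair_count (e.symm x) (e.symm y) (e.symm.injective.ne hxy),
      ← Nat.card_image_of_injective e.injective.image_injective]
    congr! 2
    ext C
    constructor
    · rintro ⟨⟨B, hB, rfl⟩, hx, hy⟩
      exact ⟨B, ⟨hB, (Set.mem_image_equiv).1 hx, (Set.mem_image_equiv).1 hy⟩, rfl⟩
    · rintro ⟨B, ⟨hB, hx, hy⟩, rfl⟩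
      exact ⟨⟨B, hB, rfl⟩, (Set.mem_image_equiv).2 hx, (Set.mem_image_equiv).2 hy⟩

end Design

section GroupActions

lemma exists_equivariant_equiv {A B P Q : Type*} [Group A] [Group B] [MulAction A P]
    [MulAction B Q] [MulAction.IsPretransitive A P] [MulAction.IsPretransitive B Q]
    (ψ : A ≃* B) {x : P} {y : Q}
    (h : (MulAction.stabilizer A x).map ψ.toMonoidHom = MulAction.stabilizer B y) :
    ∃ e : P ≃ Q, ∀ (a : A) (z : P), e (a • z) = ψ a • e z := by
  have hstab (a b : A) : ψ a • y = ψ b • y ↔ a • x = b • x := by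
    rw [← inv_smul_eq_iff, ← mul_smul, ← map_inv, ← map_mul, ← MulAction.mem_stabilizer_iff, ← h,
      Subgroup.mem_map_equiv, MulEquiv.symm_apply_apply,
      MulAction.mem_stabilizer_iff, mul_smul, inv_smul_eq_iff]
  choose f hf using fun z : P => MulAction.exists_smul_eq A x z
  have horbit (a : A) : ψ (f (a • x)) • y = ψ a • y := (hstab _ _).2 (hf _)
  refine ⟨Equiv.ofBijective (fun z => ψ (f z) • y) ⟨fun z w hzw => ?_, fun w => ?_⟩, fun a z => ?_⟩
  · rw [← hf z, ← hf w]
    exact (hstab _ _).1 hzw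
  · obtain ⟨b, rfl⟩ := MulAction.exists_smul_eq B y w
    exact ⟨ψ.symm b • x, (horbit _).trans (by rw [ψ.apply_symm_apply])⟩
  · obtain ⟨b, rfl⟩ := MulAction.exists_smul_eq A x z
    calc ψ (f (a • b • x)) • y = ψ (a * b) • y := by rw [← mul_smul, horbit]
      _ = ψ a • ψ (f (b • x)) • y := by rw [map_mul, mul_smul, horbit]

lemma fixedPoints_nonempty_of_normal_pGroup {H Ω : Type*} [Group H] [MulAction H Ω] {p : ℕ}
    [Fact p.Prime] (hΩ : ¬ p ∣ Nat.card Ω) (N : Subgroup H) [N.Normal] (hN : IsPGroup p N)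
    (hfix : (MulAction.fixedPoints N Ω).Subsingleton) : (MulAction.fixedPoints H Ω).Nonempty := by
  obtain ⟨ω, hω⟩ := hN.nonempty_fixed_point_of_prime_not_dvd_card Ω hΩ
  exact ⟨ω, fun h => hfix (smul_mem_fixedPoints_of_normal h hω) hω⟩

lemma pow_card_orbit_smul {A Ω : Type*} [Group A] [IsMulCommutative A] [MulAction A Ω] (a : A)
    (ω : Ω) : a ^ (MulAction.orbit A ω).ncard • ω = ω := by
  rw [← MulAction.index_stabilizer]
  exact (MulAction.stabilizer A ω).pow_index_mem a

variable {A : Type*} [CommGroup A] {M : Subgroup A} {S : Set A}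

lemma card_dvd_card_of_le_stabilizer (hM : M ≤ MulAction.stabilizer A S) :
    Nat.card M ∣ Nat.card S := by
  have hmul : S * (M : Set A) = S := by
    refine (mul_comm S _).trans (subset_antisymm ?_ fun s hs => ⟨1, M.one_mem, s, hs, one_mul s⟩)
    exact (Set.mul_subset_mul_right hM).trans (MulAction.stabilizer_mul_self S).subset
  rw [← hmul, M.card_mul_eq_card_subgroup_mul_card_quotient]
  exact dvd_mul_right _ _

lemma smul_coe_eq_of_le_stabilizer [Finite A] (hM : M ≤ MulAction.stabilizer A S)
    (hcard : Nat.card S ≤ Nat.card M) {c : A} (hc : c ∈ S) : c • (M : Set A) = S := by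
  refine Set.eq_of_subset_of_ncard_le ?_ ?_
  · rintro _ ⟨m, hm, rfl⟩
    rw [← hM hm]
    exact ⟨c, hc, mul_comm _ _⟩
  · rwa [Set.ncard_smul_set, ← Nat.card_coe_set_eq, ← Nat.card_coe_set_eq]

end GroupActions

section ProjectiveLine

variable {F : Type} [Field F]

variable (F) in
/-- The point `(1 : 0)` at infinity of the projective line. -/
def infty : PG1 F := Projectivization.mk F ![1, 0] (by simp)

/-- The point `(x : 1)` of the projective line, with inhomogeneous coordinate `x`. -/
def affine (x : F) : PG1 F := Projectivization.mk F ![x, 1] (by simp)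

lemma mk_eq_infty_iff {v : Fin 2 → F} (hv : v ≠ 0) :
    Projectivization.mk F v hv = infty F ↔ v 1 = 0 := by
  rw [infty, Projectivization.mk_eq_mk_iff']
  constructor
  · rintro ⟨a, rfl⟩
    simp
  · intro h
    exact ⟨v 0, by ext i; fin_cases i <;> simp [h]⟩

lemma mk_eq_affine {v : Fin 2 → F} (hv : v ≠ 0) (h : v 1 ≠ 0) :
    Projectivization.mk F v hv = affine (v 0 / v 1) :=
  (Projectivization.mk_eq_mk_iff' _ _ _ _ _).2 ⟨v 1, by
    ext i
    fin_cases i <;> simp [mul_div_cancel₀, h]⟩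

lemma affine_ne_infty (x : F) : affine x ≠ infty F :=
  mt (mk_eq_infty_iff _).1 one_ne_zero

lemma exists_affine_eq {z : PG1 F} (hz : z ≠ infty F) : ∃ x : F, affine x = z := by
  induction z using Projectivization.ind with
  | h v hv => exact ⟨_, (mk_eq_affine hv (mt (mk_eq_infty_iff hv).2 hz)).symm⟩

lemma affine_injective : Function.Injective (affine (F := F)) := by
  intro x y hxy
  obtain ⟨a, ha⟩ := (Projectivization.mk_eq_mk_iff' _ _ _ _ _).1 hxy
  have ha1 : a = 1 := by simpa using congrFun ha 1
  simpa [ha1] using (congrFun ha 0).symm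

lemma perm_ext {g h : Equiv.Perm (PG1 F)} (hinf : g (infty F) = h (infty F))
    (haff : ∀ x, g (affine x) = h (affine x)) : g = h := by
  ext1 z
  by_cases hz : z = infty F
  · rw [hz, hinf]
  · obtain ⟨x, rfl⟩ := exists_affine_eq hz
    exact haff x

lemma projSemilinear_infty_iff {σ : F ≃+* F} {g : GL (Fin 2) F} :
    projSemilinear F σ g (infty F) = infty F ↔ g 1 0 = 0 :=
  (mk_eq_infty_iff (v := semilinearAux F σ g ![1, 0])
    ((map_ne_zero_iff _ (semilinearAux_injective F σ g)).2 (by simp))).trans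
    (by simp [semilinearAux_apply])

lemma projSemilinear_affine {σ : F ≃+* F} {g : GL (Fin 2) F} (hg : g 1 0 = 0) (x : F) :
    projSemilinear F σ g (affine x) = affine ((g 0 0 * σ x + g 0 1) / g 1 1) := by
  have h11 : g 1 1 ≠ 0 := by
    have := g.det_ne_zero
    rw [Matrix.det_fin_two, hg, mul_zero, sub_zero] at this
    exact right_ne_zero_of_mul this
  refine (mk_eq_affine (v := semilinearAux F σ g ![x, 1])
    ((map_ne_zero_iff _ (semilinearAux_injective F σ g)).2 (by simp)) ?_).trans ?_
  · simpa [semilinearAux_apply, hg] using h11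
  · simp [semilinearAux_apply, hg]

/-- The natural homomorphism from `SL(2,F)` onto `PSL(2,F)`, acting on the projective line. -/
def toPSL : SpecialLinearGroup (Fin 2) F →* PSLsub F :=
  (MulAction.toPermHom (SpecialLinearGroup (Fin 2) F) (PG1 F)).codRestrict (PSLsub F) fun s =>
    Subgroup.subset_closure ⟨s, rfl⟩

lemma toPSL_surjective : Function.Surjective (toPSL (F := F)) := by
  rintro ⟨g, hg⟩
  have hle : PSLsub F ≤ (MulAction.toPermHom (SpecialLinearGroup (Fin 2) F) (PG1 F)).range := by
    rw [PSLsub, Subgroup.closure_le]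
    rintro _ ⟨s, rfl⟩
    exact ⟨s, rfl⟩
  obtain ⟨s, rfl⟩ := hle hg
  exact ⟨s, rfl⟩

lemma ker_toPSL : (toPSL (F := F)).ker = Subgroup.center (SpecialLinearGroup (Fin 2) F) :=
  (MonoidHom.ker_codRestrict _ _ _).trans SL_mulAction_ker

variable (F) in
/-- The identification of the abstract group `PSL(2,F)` with the permutation group it induces on
the projective line. -/
noncomputable def pslEquiv : PSL2 F ≃* PSLsub F :=
  (QuotientGroup.quotientMulEquivOfEq ker_toPSL.symm).trans
    (QuotientGroup.quotientKerEquivOfSurjective toPSL toPSL_surjective)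

lemma PSLsub_le_PSigmaLsub : PSLsub F ≤ PSigmaLsub F := by
  apply Subgroup.closure_mono
  rintro _ ⟨s, rfl⟩
  exact ⟨RingEquiv.refl F, s, rfl⟩

lemma exists_PSL_smul_eq_smul_eq {a b c d : PG1 F} (hab : a ≠ b) (hcd : c ≠ d) :
    ∃ g : PSLsub F, g • a = c ∧ g • b = d := by
  obtain ⟨s, hs⟩ := (MulAction.is_two_pretransitive_iff
    (G := SpecialLinearGroup (Fin 2) F)).1 inferInstance hab hcd
  exact ⟨toPSL s, hs⟩

instance : MulAction.IsPretransitive (PSLsub F) (PG1 F) where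
  exists_smul_eq a b := by
    obtain ⟨s, hs⟩ := MulAction.exists_smul_eq (SpecialLinearGroup (Fin 2) F) a b
    exact ⟨toPSL s, hs⟩

lemma toPSL_smul_infty_iff {s : SpecialLinearGroup (Fin 2) F} :
    toPSL s • infty F = infty F ↔ s 1 0 = 0 :=
  projSemilinear_infty_iff (σ := RingEquiv.refl F) (g := SpecialLinearGroup.toGL s)

lemma mul_eq_one_of_upper_triangular {s : SpecialLinearGroup (Fin 2) F} (hs : s 1 0 = 0) :
    s 0 0 * s 1 1 = 1 := by
  have hdet : s.1.det = 1 := s.2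
  rwa [Matrix.det_fin_two, hs, mul_zero, sub_zero] at hdet

lemma toPSL_smul_affine {s : SpecialLinearGroup (Fin 2) F} (hs : s 1 0 = 0) (x : F) :
    toPSL s • affine x = affine (s 0 0 ^ 2 * x + s 0 0 * s 0 1) := by
  have hdet := mul_eq_one_of_upper_triangular hs
  refine (projSemilinear_affine (σ := RingEquiv.refl F)
    (g := SpecialLinearGroup.toGL s) hs x).trans (congrArg affine ?_)
  change (s 0 0 * x + s 0 1) / s 1 1 = _
  rw [div_eq_iff (right_ne_zero_of_mul_eq_one hdet)]
  linear_combination (-(s 0 0 * x) - s 0 1) * hdet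

lemma exists_smul_affine_eq {g : PSLsub F} (hg : g • infty F = infty F) :
    ∃ (a : Fˣ) (b : F), ∀ x, g • affine x = affine (a ^ 2 * x + b) := by
  obtain ⟨s, rfl⟩ := toPSL_surjective g
  have hs := toPSL_smul_infty_iff.1 hg
  exact ⟨Units.mkOfMulEqOne _ _ (mul_eq_one_of_upper_triangular hs), _, toPSL_smul_affine hs⟩

/-- The translations `x ↦ x + t` of the projective line. -/
def translation : Multiplicative F →* MulAction.stabilizer (PSLsub F) (infty F) :=
  MonoidHom.codRestrict
    ((toPSL (F := F)).comp
      { toFun := fun t : Multiplicative F => ⟨!![1, t.toAdd; 0, 1], by simp⟩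
        map_one' := Subtype.ext Matrix.one_fin_two.symm
        map_mul' := fun t u : Multiplicative F => Subtype.ext <|
          show !![1, t.toAdd + u.toAdd; 0, 1] = !![1, t.toAdd; 0, 1] * !![1, u.toAdd; 0, (1 : F)] by
            simp [add_comm] })
    _ fun _ => MulAction.mem_stabilizer_iff.2 (toPSL_smul_infty_iff.2 rfl)

lemma translation_smul_affine (t : Multiplicative F) (x : F) :
    translation t • affine x = affine (x + t.toAdd) := by
  refine (toPSL_smul_affine rfl x).trans (congrArg affine ?_)
  change 1 ^ 2 * x + 1 * t.toAdd = _
  ring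

lemma translation_pow_char (p : ℕ) [CharP F p] (t : Multiplicative F) :
    translation t ^ p = 1 := by
  have ht : p • t.toAdd = 0 := by rw [nsmul_eq_mul, CharP.cast_eq_zero, zero_mul]
  rw [← map_pow, ← ofAdd_toAdd t, ← ofAdd_nsmul, ht, ofAdd_zero, map_one]

lemma translation_one_ne_one : translation (.ofAdd (1 : F)) ≠ 1 := by
  intro h
  have := translation_smul_affine (.ofAdd (1 : F)) 0
  rw [h, one_smul] at this
  exact zero_ne_one ((affine_injective this).trans (zero_add 1))

/-- The homotheties `x ↦ a² x` of the projective line. -/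
def homothety : Fˣ →* PSLsub F :=
  toPSL.comp
    { toFun := fun a => ⟨!![(a : F), 0; 0, (a⁻¹ : Fˣ)], by simp⟩
      map_one' := Subtype.ext (by simp [Matrix.one_fin_two])
      map_mul' := fun a b => Subtype.ext <|
        show !![((a * b : Fˣ) : F), 0; 0, ((a * b)⁻¹ : Fˣ)] =
            !![(a : F), 0; 0, (a⁻¹ : Fˣ)] * !![(b : F), 0; 0, (b⁻¹ : Fˣ)] by
          simp [mul_comm] }

lemma homothety_smul_infty (a : Fˣ) : homothety a • infty F = infty F :=
  toPSL_smul_infty_iff.2 rfl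

lemma homothety_smul_affine (a : Fˣ) (x : F) : homothety a • affine x = affine (a ^ 2 * x) := by
  refine (toPSL_smul_affine rfl x).trans (congrArg affine ?_)
  change (a : F) ^ 2 * x + a * 0 = _
  ring

lemma homothety_smul_affine_zero (a : Fˣ) : homothety a • affine (0 : F) = affine 0 := by
  rw [homothety_smul_affine, mul_zero]

lemma PSL_ext {g h : PSLsub F} (hinf : g • infty F = h • infty F)
    (haff : ∀ x : F, g • affine x = h • affine x) : g = h :=
  Subtype.ext (perm_ext hinf haff)

lemma exists_eq_homothety {g : PSLsub F} (hinf : g • infty F = infty F)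
    (h0 : g • affine 0 = affine (0 : F)) : ∃ a : Fˣ, g = homothety a := by
  obtain ⟨a, b, hab⟩ := exists_smul_affine_eq hinf
  have hb : b = 0 := affine_injective (by simpa [hab] using h0)
  refine ⟨a, PSL_ext ?_ fun x => ?_⟩
  · rw [hinf, homothety_smul_infty]
  · rw [hab, hb, add_zero, homothety_smul_affine]

lemma homothety_eq_one_iff {a : Fˣ} : homothety a = 1 ↔ (a : F) ^ 2 = 1 := by
  refine ⟨fun h => affine_injective ?_, fun h => PSL_ext ?_ fun x => ?_⟩
  · rw [← mul_one ((a : F) ^ 2), ← homothety_smul_affine, h, one_smul]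
  · rw [homothety_smul_infty, one_smul]
  · rw [homothety_smul_affine, h, one_mul, one_smul]

end ProjectiveLine

section Borel

variable {F : Type} [Field F]

lemma card_PG1 [Finite F] : Nat.card (PG1 F) = Nat.card F + 1 :=
  Projectivization.card_of_finrank_two F _ (Module.finrank_fin_fun F)

lemma eq_one_of_pow_char_eq_one (p : ℕ) [Fact p.Prime] [CharP F p] {g : PSLsub F}
    (hg : g ^ p = 1) {x y : PG1 F} (hxy : x ≠ y) (hx : g • x = x) (hy : g • y = y) : g = 1 := by
  obtain ⟨c, rfl, rfl⟩ := exists_PSL_smul_eq_smul_eq (affine_ne_infty 0) hxy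
  obtain ⟨a, ha⟩ : ∃ a : Fˣ, c⁻¹ * g * c = homothety a :=
    exists_eq_homothety (by rw [mul_smul, mul_smul, hy, inv_smul_smul])
      (by rw [mul_smul, mul_smul, hx, inv_smul_smul])
  have hap : homothety (a ^ p) = 1 := by
    rw [map_pow, ← ha]
    simpa [hg] using conj_pow (a := c⁻¹) (b := g) (i := p)
  have ha2 : (a : F) ^ 2 = 1 := by
    rw [homothety_eq_one_iff, Units.val_pow_eq_pow_val, ← pow_mul, mul_comm, pow_mul] at hap
    exact frobenius_inj F p (by simpa [frobenius_def] using hap)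
  simpa [mul_assoc, inv_mul_eq_one] using ha.trans (homothety_eq_one_iff.2 ha2)

instance : (translation (F := F)).range.Normal where
  conj_mem := by
    rintro _ ⟨t, rfl⟩ g
    obtain ⟨a, b, hab⟩ := exists_smul_affine_eq g.2
    have hsmul (x : F) : g • affine x = affine (a ^ 2 * x + b) := hab x
    refine ⟨.ofAdd (a ^ 2 * t.toAdd), eq_mul_inv_of_mul_eq (Subtype.ext (PSL_ext ?_ fun x => ?_))⟩
    · exact (translation _ * g).2.trans (g * translation t).2.symm
    · change (translation _ * g) • affine x = (g * translation t) • affine x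
      rw [mul_smul, mul_smul, hsmul, translation_smul_affine, translation_smul_affine, hsmul,
        toAdd_ofAdd]
      ring_nf

lemma exists_eq_stabilizer [Finite F] {z : PG1 F} {H : Subgroup (PSLsub F)}
    (ψ : MulAction.stabilizer (PSLsub F) z ≃* H) :
    ∃ w : PG1 F, H = MulAction.stabilizer (PSLsub F) w := by
  have hequiv (w : PG1 F) : Nonempty (MulAction.stabilizer (PSLsub F) w ≃* H) := by
    obtain ⟨c, hc⟩ := MulAction.exists_smul_eq (PSLsub F) z w
    exact ⟨(MulAction.stabilizerEquivStabilizer hc.symm).symm.trans ψ⟩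
  obtain ⟨χ⟩ := hequiv (infty F)
  obtain ⟨p, hp⟩ := CharP.exists F
  have : Fact p.Prime := ⟨CharP.char_is_prime F p⟩
  have hpow (t : Multiplicative F) : χ (translation t) ^ p = 1 := by
    rw [← map_pow, translation_pow_char, map_one]
  have hfix :
      (MulAction.fixedPoints (translation.range.map χ.toMonoidHom) (PG1 F)).Subsingleton := by
    intro x hx y hy
    by_contra hxy
    let n : translation.range.map χ.toMonoidHom := ⟨_, _, ⟨.ofAdd (1 : F), rfl⟩, rfl⟩
    have := eq_one_of_pow_char_eq_one p (congrArg Subtype.val (hpow (.ofAdd 1))) hxy (hx n) (hy n)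
    exact translation_one_ne_one ((map_eq_one_iff χ χ.injective).1 (Subtype.ext this))
  have hdvd : ¬ p ∣ Nat.card (PG1 F) := by
    have := Fintype.ofFinite F
    rw [card_PG1, ← CharP.cast_eq_zero_iff F, Nat.card_eq_fintype_card, Nat.cast_add,
      FiniteField.cast_card_eq_zero]
    simp
  have : (translation.range.map χ.toMonoidHom).Normal :=
    Subgroup.Normal.map inferInstance _ χ.surjective
  obtain ⟨w, hw⟩ := fixedPoints_nonempty_of_normal_pGroup hdvd _
    (by rintro ⟨_, _, ⟨t, rfl⟩, rfl⟩; exact ⟨1, Subtype.ext ((pow_one p).symm ▸ hpow t)⟩) hfix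
  obtain ⟨ω⟩ := hequiv w
  exact ⟨w, Subgroup.eq_of_le_of_card_ge (fun h hh => hw ⟨h, hh⟩) (Nat.card_congr ω.toEquiv).le⟩

end Borel

section Normalizer

variable {F : Type} [Field F]

/-- A permutation `h` of the affine line `F` normalizes the group of the maps `x ↦ a² x + b`, the
stabilizer of `∞` in `PSL(2,F)`; stated as `h ∘ n = n' ∘ h` to avoid the inverse of `h`. -/
def NormalizesSquareAffine (h : Equiv.Perm F) : Prop :=
  ∀ (a : Fˣ) (b : F), ∃ (c : Fˣ) (d : F), ∀ x, h (a ^ 2 * x + b) = c ^ 2 * h x + d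

lemma exists_perm_affine {g : Equiv.Perm (PG1 F)} (hg : g (infty F) = infty F) :
    ∃ h : Equiv.Perm F, ∀ x, g (affine x) = affine (h x) := by
  have haff (x : F) : g (affine x) ≠ infty F := fun hx =>
    affine_ne_infty x (g.injective (hx.trans hg.symm))
  choose h hh using fun x => exists_affine_eq (haff x)
  refine ⟨Equiv.ofBijective h ⟨fun x y hxy => ?_, fun y => ?_⟩, fun x => (hh x).symm⟩
  · exact affine_injective (g.injective (by rw [← hh, ← hh, hxy]))
  · obtain ⟨x, hx⟩ : ∃ x, affine x = g.symm (affine y) :=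
      exists_affine_eq fun hy => affine_ne_infty y ((g.symm_apply_eq.1 hy).trans hg)
    exact ⟨x, affine_injective (by rw [hh, hx, g.apply_symm_apply])⟩

lemma normalizesSquareAffine_of_mem_normalizer {g : Equiv.Perm (PG1 F)} {h : Equiv.Perm F}
    (hg : g ∈ Subgroup.normalizer (PSLsub F : Set (Equiv.Perm (PG1 F))))
    (hinf : g (infty F) = infty F)
    (hh : ∀ x, g (affine x) = affine (h x)) : NormalizesSquareAffine h := by
  intro a b
  let n : PSLsub F := translation (.ofAdd b) * homothety a
  have hninf : n • infty F = infty F := by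
    rw [mul_smul, homothety_smul_infty]
    exact (translation (.ofAdd b)).2
  have hn (x : F) : n • affine x = affine (a ^ 2 * x + b) := by
    rw [mul_smul, homothety_smul_affine]
    exact translation_smul_affine _ _
  let m : PSLsub F := ⟨_, (Subgroup.mem_normalizer_iff.1 hg n).1 n.2⟩
  have hm (z : PG1 F) : m • g z = g (n • z) := congrArg (fun w => g (n • w)) (g.symm_apply_apply z)
  obtain ⟨c, d, hcd⟩ := exists_smul_affine_eq (g := m) (by rw [← hinf, hm, hninf])
  exact ⟨c, d, fun x => affine_injective (by rw [← hh, ← hn, ← hm, hh, hcd])⟩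

namespace NormalizesSquareAffine

variable {h : Equiv.Perm F}

lemma map_add (hh : NormalizesSquareAffine h) (h0 : h 0 = 0) (x t : F) :
    h (x + t) = h x + h t := by
  obtain ⟨c, d, hcd⟩ := hh 1 t
  simp only [Units.val_one, one_pow, one_mul] at hcd
  have hd : h t = d := by simpa [h0] using hcd 0
  by_cases ht : t = 0
  · rw [ht, h0, add_zero, add_zero]
  -- Otherwise the map with leading coefficient `c²` would have a fixed point, unlike `x ↦ x + t`.
  have hc : (c : F) ^ 2 = 1 := by
    by_contra hc
    have hc' : 1 - (c : F) ^ 2 ≠ 0 := sub_ne_zero.2 (Ne.symm hc)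
    obtain ⟨z, hz⟩ := h.surjective (d / (1 - (c : F) ^ 2))
    have hfixed : h (z + t) = h z := by
      rw [hcd, hz]
      field_simp
      ring
    exact ht (add_eq_left.1 (h.injective hfixed))
  rw [hcd, hc, one_mul, hd]

lemma map_sq_mul (hh : NormalizesSquareAffine h) (h0 : h 0 = 0) (a x : F) :
    h (a ^ 2 * x) * h 1 = h (a ^ 2) * h x := by
  by_cases ha : a = 0
  · simp [ha, h0]
  obtain ⟨c, d, hcd⟩ := hh (Units.mk0 a ha) 0
  simp only [Units.val_mk0, add_zero] at hcd
  have hd : d = 0 := by simpa [h0, eq_comm] using hcd 0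
  have hc : h (a ^ 2) = c ^ 2 * h 1 := by simpa [hd] using hcd 1
  rw [hcd, hc, hd]
  ring

lemma map_mul (hh : NormalizesSquareAffine h) (h0 : h 0 = 0) (h2 : (2 : F) ≠ 0) (x y : F) :
    h (x * y) * h 1 = h x * h y := by
  -- every element is a difference of two squares
  obtain ⟨u, w, rfl⟩ : ∃ u w : F, x = u ^ 2 - w ^ 2 :=
    ⟨(x + 1) / 2, (x - 1) / 2, by field_simp; ring⟩
  have hsub (u w : F) : h (u - w) = h u - h w := by
    rw [eq_sub_iff_add_eq, ← hh.map_add h0, sub_add_cancel]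
  rw [sub_mul, hsub, hsub, sub_mul, sub_mul, hh.map_sq_mul h0, hh.map_sq_mul h0]

lemma exists_ringEquiv (hh : NormalizesSquareAffine h) (h0 : h 0 = 0) (h2 : (2 : F) ≠ 0) :
    ∃ σ : F ≃+* F, ∀ x, h x = h 1 * σ x := by
  have h1 : h 1 ≠ 0 := fun e => one_ne_zero (h.injective (e.trans h0.symm))
  refine ⟨RingEquiv.mk (h.trans (Equiv.mulLeft₀ (h 1)⁻¹ (inv_ne_zero h1))) (fun x y => ?_)
    fun x y => ?_, fun x => (mul_inv_cancel_left₀ h1 _).symm⟩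
  · change (h 1)⁻¹ * h (x * y) = (h 1)⁻¹ * h x * ((h 1)⁻¹ * h y)
    rw [mul_mul_mul_comm, ← hh.map_mul h0 h2]
    field_simp
  · change (h 1)⁻¹ * h (x + y) = (h 1)⁻¹ * h x + (h 1)⁻¹ * h y
    rw [hh.map_add h0, mul_add]

end NormalizesSquareAffine

lemma exists_ringEquiv_of_mem_normalizer (h2 : (2 : F) ≠ 0) {g : Equiv.Perm (PG1 F)}
    (hg : g ∈ Subgroup.normalizer (PSLsub F : Set (Equiv.Perm (PG1 F))))
    (hinf : g (infty F) = infty F) (h0 : g (affine 0) = affine 0) :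
    ∃ (a : Fˣ) (σ : F ≃+* F), ∀ x, g (affine x) = affine (a * σ x) := by
  obtain ⟨h, hh⟩ := exists_perm_affine hinf
  have hh0 : h 0 = 0 := affine_injective ((hh 0).symm.trans h0)
  have hh1 : h 1 ≠ 0 := fun e => one_ne_zero (h.injective (e.trans hh0.symm))
  obtain ⟨σ, hσ⟩ :=
    (normalizesSquareAffine_of_mem_normalizer hg hinf hh).exists_ringEquiv hh0 h2
  exact ⟨Units.mk0 _ hh1, σ, fun x => by rw [hh, hσ, Units.val_mk0]⟩

lemma mem_PSigmaLsub_of_forall_affine {g : Equiv.Perm (PG1 F)} {σ : F ≃+* F} {d : Fˣ}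
    (hinf : g (infty F) = infty F) (hg : ∀ x, g (affine x) = affine (d ^ 2 * σ x)) :
    g ∈ PSigmaLsub F := by
  have hσinf : projSemilinear F σ (SpecialLinearGroup.toGL 1) (infty F) = infty F :=
    projSemilinear_infty_iff.2 rfl
  have hσ (x : F) : projSemilinear F σ (SpecialLinearGroup.toGL 1) (affine x) = affine (σ x) :=
    (projSemilinear_affine rfl x).trans (by simp)
  have hfac : g = homothety d * projSemilinear F σ (SpecialLinearGroup.toGL 1) :=
    perm_ext (by rw [hinf, Equiv.Perm.mul_apply, hσinf]; exact (homothety_smul_infty d).symm)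
      fun x => by rw [hg, Equiv.Perm.mul_apply, hσ]; exact (homothety_smul_affine d _).symm
  rw [hfac]
  exact mul_mem (PSLsub_le_PSigmaLsub (homothety d).2) (Subgroup.subset_closure ⟨σ, 1, rfl⟩)

end Normalizer

section BlocksThroughZeroAndInfinity

variable {F : Type} [Field F] {𝓑 : Set (Set (PG1 F))} {k lam : ℕ} {B C : Set (PG1 F)}

/-- The nonzero affine coordinates of the points of a subset of the projective line, as a subset of
the group `Fˣ`, on which the homotheties act by multiplication. -/
def unitsOf (B : Set (PG1 F)) : Set Fˣ :=
  {a | affine (a : F) ∈ B}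

lemma card_eq_card_unitsOf_add_two [Finite F] (hinf : infty F ∈ B) (h0 : affine 0 ∈ B) :
    Nat.card B = Nat.card (unitsOf B) + 2 := by
  have hB : insert (infty F) (insert (affine 0) ((fun a : Fˣ => affine (a : F)) '' unitsOf B)) =
      B := by
    refine subset_antisymm ?_ fun z hz => ?_
    · rintro _ (rfl | rfl | ⟨a, ha, rfl⟩)
      exacts [hinf, h0, ha]
    · by_cases hz' : z = infty F
      · exact Or.inl hz'
      obtain ⟨x, rfl⟩ := exists_affine_eq hz'
      by_cases hx : x = 0
      · exact Or.inr (Or.inl (congrArg affine hx))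
      · exact Or.inr (Or.inr ⟨Units.mk0 x hx, hz, rfl⟩)
  have h0' : affine 0 ∉ (fun a : Fˣ => affine (a : F)) '' unitsOf B := by
    rintro ⟨a, -, ha⟩
    exact a.ne_zero (affine_injective ha)
  have hinf' : infty F ∉ insert (affine 0) ((fun a : Fˣ => affine (a : F)) '' unitsOf B) := by
    rintro (h | ⟨a, -, ha⟩)
    exacts [affine_ne_infty 0 h.symm, affine_ne_infty _ ha]
  rw [Nat.card_coe_set_eq, Nat.card_coe_set_eq, ← congrArg Set.ncard hB,
    Set.ncard_insert_of_notMem hinf', Set.ncard_insert_of_notMem h0',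
    Set.ncard_image_of_injective _ fun a b hab => Units.val_injective (affine_injective hab)]

lemma sq_mem_stabilizer_unitsOf {a : Fˣ} (ha : homothety a • B = B) :
    a ^ 2 ∈ MulAction.stabilizer Fˣ (unitsOf B) := by
  refine MulAction.mem_stabilizer_set.2 fun b => ?_
  change affine ((a : F) ^ 2 * b) ∈ B ↔ affine (b : F) ∈ B
  rw [← homothety_smul_affine, ← Set.smul_mem_smul_set_iff (a := homothety a) (x := affine (b : F)),
    ha]

lemma range_powMonoidHom_le_stabilizer_unitsOf (B : Set (PG1 F)) :
    (powMonoidHom (2 * (MulAction.orbit (homothety (F := F)).range B).ncard) : Fˣ →* Fˣ).range ≤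
      MulAction.stabilizer Fˣ (unitsOf B) := by
  rintro _ ⟨a, rfl⟩
  rw [powMonoidHom_apply, mul_comm, pow_mul]
  refine sq_mem_stabilizer_unitsOf ?_
  rw [map_pow]
  exact pow_card_orbit_smul (A := (homothety (F := F)).range) ⟨_, a, rfl⟩ B

lemma card_sub_one_dvd_gcd_mul [Finite F] (hinf : infty F ∈ B) (h0 : affine 0 ∈ B) :
    Nat.card F - 1 ∣ (Nat.card F - 1).gcd
      (2 * (MulAction.orbit (homothety (F := F)).range B).ncard) * (Nat.card B - 2) := by
  have hdvd := card_dvd_card_of_le_stabilizer (range_powMonoidHom_le_stabilizer_unitsOf B)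
  rw [IsCyclic.card_powMonoidHom_range, Nat.card_units] at hdvd
  rw [card_eq_card_unitsOf_add_two hinf h0, Nat.add_sub_cancel]
  exact (Nat.mul_div_cancel' (Nat.gcd_dvd_left _ _)).symm.dvd.trans (Nat.mul_dvd_mul_left _ hdvd)

lemma orbit_homothety_subset_blocksThrough (hacts : ActsOn (PSLsub F) 𝓑)
    (hB : B ∈ blocksThrough 𝓑 (infty F) (affine 0)) :
    MulAction.orbit (homothety (F := F)).range B ⊆ blocksThrough 𝓑 (infty F) (affine 0) := by
  rintro _ ⟨⟨_, a, rfl⟩, rfl⟩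
  exact ⟨hacts _ B hB.1, ⟨_, hB.2.1, homothety_smul_infty a⟩,
    ⟨_, hB.2.2, homothety_smul_affine_zero a⟩⟩

lemma IsDesign.ncard_blocksThrough (hD : IsDesign 𝓑 k lam) :
    (blocksThrough 𝓑 (infty F) (affine 0)).ncard = lam :=
  (Nat.card_coe_set_eq _).symm.trans (hD.pair_count _ _ (affine_ne_infty 0).symm)

lemma IsDesign.exists_mem_blocksThrough (hD : IsDesign 𝓑 k lam) (hlam : lam ≠ 0) :
    ∃ B, B ∈ blocksThrough 𝓑 (infty F) (affine 0) :=
  Set.nonempty_of_ncard_ne_zero (hD.ncard_blocksThrough.trans_ne hlam)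

lemma IsDesign.ncard_orbit_homothety_le [Finite F] (hD : IsDesign 𝓑 k lam)
    (hacts : ActsOn (PSLsub F) 𝓑) (hB : B ∈ blocksThrough 𝓑 (infty F) (affine 0)) :
    (MulAction.orbit (homothety (F := F)).range B).ncard ≤ lam :=
  (Set.ncard_le_ncard (orbit_homothety_subset_blocksThrough hacts hB)).trans_eq
    hD.ncard_blocksThrough

lemma IsDesign.exists_homothety_smul_eq [Finite F] (hD : IsDesign 𝓑 k lam)
    (hacts : ActsOn (PSLsub F) 𝓑) (hB : B ∈ blocksThrough 𝓑 (infty F) (affine 0))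
    (hcard : lam ≤ (MulAction.orbit (homothety (F := F)).range B).ncard)
    (hC : C ∈ blocksThrough 𝓑 (infty F) (affine 0)) : ∃ a : Fˣ, homothety a • B = C := by
  rw [← Set.eq_of_subset_of_ncard_le (orbit_homothety_subset_blocksThrough hacts hB)
    (hD.ncard_blocksThrough.trans_le hcard)] at hC
  obtain ⟨⟨_, a, rfl⟩, ha⟩ := hC
  exact ⟨a, ha⟩

lemma exists_smul_mem_blocksThrough (hacts : ActsOn (PSLsub F) 𝓑) (hC : C ∈ 𝓑) {x y : PG1 F}
    (hxy : x ≠ y) (hx : x ∈ C) (hy : y ∈ C) :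
    ∃ n : PSLsub F, n • x = infty F ∧ n • y = affine 0 ∧
      n • C ∈ blocksThrough 𝓑 (infty F) (affine 0) := by
  obtain ⟨n, hnx, hny⟩ := exists_PSL_smul_eq_smul_eq hxy (affine_ne_infty (0 : F)).symm
  exact ⟨n, hnx, hny, hacts n C hC, ⟨x, hx, hnx⟩, ⟨y, hy, hny⟩⟩

lemma IsDesign.mem_iff_mem_orbit [Finite F] (hD : IsDesign 𝓑 k lam) (hk : 1 < k)
    (hacts : ActsOn (PSLsub F) 𝓑) (hB : B ∈ blocksThrough 𝓑 (infty F) (affine 0))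
    (hcard : lam ≤ (MulAction.orbit (homothety (F := F)).range B).ncard) (C : Set (PG1 F)) :
    C ∈ 𝓑 ↔ C ∈ MulAction.orbit (PSLsub F) B := by
  refine ⟨fun hC => ?_, ?_⟩
  · obtain ⟨x, y, hx, hy, hxy⟩ :=
      (Set.one_lt_ncard_iff (s := C)).1 (by rwa [← Nat.card_coe_set_eq, hD.block_card C hC])
    obtain ⟨n, -, -, hn⟩ := exists_smul_mem_blocksThrough hacts hC hxy hx hy
    obtain ⟨a, ha⟩ := hD.exists_homothety_smul_eq hacts hB hcard hn
    exact ⟨n⁻¹ * homothety a, by simp only [mul_smul, ha, inv_smul_smul]⟩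
  · rintro ⟨n, rfl⟩
    exact hacts n B hB.1

end BlocksThroughZeroAndInfinity

section Parameters

lemma eq_of_mul_sub_one_dvd_gcd_mul {s u e : ℕ} (hs : 2 ≤ s) (hu : 2 ≤ u) (he : 1 ≤ e)
    (he3 : e ≤ 3) (h : s * u - 1 ∣ (s * u - 1).gcd (2 * e) * (u - 1)) :
    (s = 2 ∧ u = 2 ∧ e = 3) ∨ (s = 3 ∧ u = 3 ∧ e = 2) ∨ (s = 5 ∧ u = 5 ∧ e = 3) := by
  have hgcd : (s * u - 1).gcd (2 * e) ≤ 6 :=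
    (Nat.gcd_le_right _ (by omega)).trans (by omega)
  have hpos : 0 < (s * u - 1).gcd (2 * e) := Nat.gcd_pos_of_pos_right _ (by omega)
  -- With `c` the gcd and `j` the cofactor, `j (s u - 1) = c (u - 1)` reads `u (c - j s) = c - j`.
  have hbound : s ≤ 5 ∧ u ≤ 5 := by
    generalize (s * u - 1).gcd (2 * e) = c at h hgcd hpos
    obtain ⟨j, hj⟩ := h
    zify [show 1 ≤ u by omega, show 1 ≤ s * u by nlinarith] at hj hgcd hpos hs hu ⊢
    have hfactor : (u : ℤ) * (c - j * s) = c - j := by linear_combination hj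
    have hj0 : 0 < (j : ℤ) := by
      by_contra hj0
      have : (j : ℤ) = 0 := by omega
      rw [this] at hj
      nlinarith
    have hjc : (j : ℤ) < c := by
      have : (j : ℤ) * (u - 1) < c * (u - 1) := by
        nlinarith [mul_pos hj0 (by linarith : (0 : ℤ) < u)]
      exact lt_of_mul_lt_mul_right this (by linarith)
    have hjs : 0 < (c : ℤ) - j * s := by
      by_contra! hneg
      nlinarith
    constructor <;> nlinarith
  obtain ⟨hs5, hu5⟩ := hbound
  clear hgcd hpos
  interval_cases s <;> interval_cases u <;> interval_cases e <;> revert h <;> decide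

end Parameters

section BaerSublines

variable {F : Type} [Field F] {B : Set (PG1 F)}

lemma infty_mem_canonicalSubline (K : Subfield F) : infty F ∈ canonicalSubline F K :=
  ⟨_, _, fun i => by fin_cases i <;> simp [one_mem, zero_mem], rfl⟩

lemma affine_mem_canonicalSubline_iff {K : Subfield F} {x : F} :
    affine x ∈ canonicalSubline F K ↔ x ∈ K := by
  constructor
  · rintro ⟨v, hv, hK, hx⟩
    have hv1 : v 1 ≠ 0 := fun h => affine_ne_infty x (hx.trans ((mk_eq_infty_iff hv).2 h))
    rw [affine_injective (hx.trans (mk_eq_affine hv hv1))]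
    exact div_mem (hK 0) (hK 1)
  · exact fun hx => ⟨_, _, fun i => by fin_cases i <;> simp [hx, one_mem], rfl⟩

lemma isBaerSubline_of_affine_mem_iff {K : Subfield F} {c : F} (hc : c ≠ 0) (hinf : infty F ∈ B)
    (hB : ∀ x, affine (c * x) ∈ B ↔ x ∈ K) : IsBaerSubline F K B := by
  let g : GL (Fin 2) F := Matrix.GeneralLinearGroup.mkOfDetNeZero !![c, 0; 0, 1]
    (by simpa [Matrix.det_fin_two] using hc)
  have hginf : projSemilinear F (RingEquiv.refl F) g (infty F) = infty F :=
    projSemilinear_infty_iff.2 rfl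
  have hgaff (x : F) : projSemilinear F (RingEquiv.refl F) g (affine x) = affine (c * x) :=
    (projSemilinear_affine rfl x).trans (congrArg affine (by
      change (c * x + 0) / 1 = c * x
      rw [add_zero, div_one]))
  refine ⟨g, ?_⟩
  rw [← Set.image_preimage_eq B (projSemilinear F (RingEquiv.refl F) g).surjective]
  congr 1
  ext z
  by_cases hz : z = infty F
  · rw [hz, Set.mem_preimage, hginf]
    exact iff_of_true hinf (infty_mem_canonicalSubline K)
  · obtain ⟨x, rfl⟩ := exists_affine_eq hz
    rw [Set.mem_preimage, hgaff, hB, affine_mem_canonicalSubline_iff]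

lemma range_powMonoidHom_eq_ker {A : Type*} [CommGroup A] [IsCyclic A] [Finite A] {m n : ℕ}
    (hA : Nat.card A = m * n) : (powMonoidHom m : A →* A).range = (powMonoidHom n).ker := by
  have hmn : 0 < m * n := hA ▸ Nat.card_pos
  refine Subgroup.eq_of_le_of_card_ge ?_ ?_
  · rintro _ ⟨a, rfl⟩
    rw [MonoidHom.mem_ker, powMonoidHom_apply, powMonoidHom_apply, ← pow_mul, ← hA,
      pow_card_eq_one']
  · rw [IsCyclic.card_powMonoidHom_ker, IsCyclic.card_powMonoidHom_range, hA, Nat.gcd_mul_left_left,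
      Nat.gcd_mul_right_left, Nat.mul_div_cancel_left _ (Nat.pos_of_mul_pos_right hmn)]

lemma card_units_of_card_eq_sq {p : ℕ} (hF : Nat.card F = p ^ 2) :
    Nat.card Fˣ = (p + 1) * (p - 1) := by
  rw [Nat.card_units, hF, ← Nat.sq_sub_sq, one_pow]

variable [Finite F] {p : ℕ} [Fact p.Prime]

lemma coe_mem_bot_iff (hF : Nat.card F = p ^ 2) (a : Fˣ) :
    (a : F) ∈ (⊥ : Subfield F) ↔ a ∈ (powMonoidHom (p + 1) : Fˣ →* Fˣ).range := by
  have := Fintype.ofFinite F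
  have : CharP F p := charP_of_card_eq_prime_pow (Nat.card_eq_fintype_card.symm.trans hF)
  rw [range_powMonoidHom_eq_ker (card_units_of_card_eq_sq hF), Subfield.mem_bot_iff_pow_eq_self F p,
    MonoidHom.mem_ker, powMonoidHom_apply, ← Units.val_pow_eq_pow_val, Units.val_inj,
    ← mul_left_inj a (b := a ^ (p - 1)), pow_sub_one_mul (Fact.out : p.Prime).ne_zero, one_mul]

lemma exists_smul_range_powMonoidHom_eq_unitsOf (hF : Nat.card F = p ^ 2)
    (horbit : 2 * (MulAction.orbit (homothety (F := F)).range B).ncard = p + 1)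
    (hB : Nat.card B = p + 1) (hinf : infty F ∈ B) (h0 : affine 0 ∈ B) :
    ∃ c ∈ unitsOf B, c • ((powMonoidHom (p + 1) : Fˣ →* Fˣ).range : Set Fˣ) = unitsOf B := by
  have hp : 2 ≤ p := (Fact.out : p.Prime).two_le
  have hcard := card_eq_card_unitsOf_add_two hinf h0
  obtain ⟨c, hc⟩ : (unitsOf B).Nonempty :=
    Set.nonempty_of_ncard_ne_zero (by rw [← Nat.card_coe_set_eq]; omega)
  refine ⟨c, hc, smul_coe_eq_of_le_stabilizer
    (horbit ▸ range_powMonoidHom_le_stabilizer_unitsOf B) ?_ hc⟩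
  rw [IsCyclic.card_powMonoidHom_range, card_units_of_card_eq_sq hF, Nat.gcd_mul_right_left,
    Nat.mul_div_cancel_left _ p.succ_pos]
  omega

lemma isBaerSubline_bot_of_smul_range_eq_unitsOf (hF : Nat.card F = p ^ 2) (hinf : infty F ∈ B)
    (h0 : affine 0 ∈ B) {c : Fˣ}
    (hc : c • ((powMonoidHom (p + 1) : Fˣ →* Fˣ).range : Set Fˣ) = unitsOf B) :
    IsBaerSubline F ⊥ B := by
  refine isBaerSubline_of_affine_mem_iff c.ne_zero hinf fun x => ?_
  by_cases hx : x = 0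
  · rw [hx, mul_zero]
    exact iff_of_true h0 (zero_mem _)
  lift x to Fˣ using IsUnit.mk0 x hx
  rw [coe_mem_bot_iff hF]
  change c * x ∈ unitsOf B ↔ _
  rw [← hc, ← smul_eq_mul, Set.smul_mem_smul_set_iff, SetLike.mem_coe]

end BaerSublines

section SemilinearNormalizer

variable {F : Type} [Field F] [Finite F] {𝓑 : Set (Set (PG1 F))} {k lam : ℕ} {B : Set (PG1 F)}

lemma isSquare_div_map (h2 : ringChar F ≠ 2) (σ : F ≃+* F) (c : Fˣ) :
    IsSquare (c / Units.map (σ : F →* F) c) := by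
  have := Fintype.ofFinite F
  have hc : c ^ (Fintype.card F / 2) = 1 ∨ c ^ (Fintype.card F / 2) = -1 := by
    simpa [Units.ext_iff] using FiniteField.pow_dichotomy h2 c.ne_zero
  rw [FiniteField.unit_isSquare_iff h2, div_pow, ← map_pow, div_eq_one]
  rcases hc with hc | hc <;> simp [hc]

lemma mem_PSigmaLsub_of_smul_eq_self (h2 : ringChar F ≠ 2) {c : Fˣ} (hc : c ∈ unitsOf B)
    (hsq : ∀ a ∈ unitsOf B, IsSquare (a / c)) {g : Equiv.Perm (PG1 F)}
    (hg : g ∈ Subgroup.normalizer (PSLsub F : Set (Equiv.Perm (PG1 F))))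
    (hinf : g (infty F) = infty F) (h0 : g (affine 0) = affine 0) (hgB : g • B = B) :
    g ∈ PSigmaLsub F := by
  obtain ⟨a, σ, hσ⟩ := exists_ringEquiv_of_mem_normalizer (Ring.two_ne_zero h2) hg hinf h0
  have hmem : a * Units.map (σ : F →* F) c ∈ unitsOf B := by
    change affine (a * σ c) ∈ B
    rw [← hσ, ← hgB]
    exact ⟨_, hc, rfl⟩
  obtain ⟨d, hd⟩ : IsSquare a := by
    have := (hsq _ hmem).mul (isSquare_div_map h2 σ c)
    rwa [div_mul_div_cancel, mul_div_cancel_right] at this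
  refine mem_PSigmaLsub_of_forall_affine (σ := σ) (d := d) hinf fun x => ?_
  rw [hσ, hd, Units.val_mul, sq]

lemma IsDesign.mem_PSigmaLsub (hD : IsDesign 𝓑 k lam) (hacts : ActsOn (PSLsub F) 𝓑)
    (hB : B ∈ blocksThrough 𝓑 (infty F) (affine 0))
    (hcard : lam ≤ (MulAction.orbit (homothety (F := F)).range B).ncard) (h2 : ringChar F ≠ 2)
    {c : Fˣ} (hc : c ∈ unitsOf B) (hsq : ∀ a ∈ unitsOf B, IsSquare (a / c))
    {g : Equiv.Perm (PG1 F)}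
    (hg : g ∈ Subgroup.normalizer (PSLsub F : Set (Equiv.Perm (PG1 F))))
    (hgB : g • B ∈ 𝓑) : g ∈ PSigmaLsub F := by
  obtain ⟨n, hninf, hn0, hn⟩ := exists_smul_mem_blocksThrough hacts hgB
    (g.injective.ne (affine_ne_infty 0).symm) ⟨_, hB.2.1, rfl⟩ ⟨_, hB.2.2, rfl⟩
  obtain ⟨a, ha⟩ := hD.exists_homothety_smul_eq hacts hB hcard hn
  let m : PSLsub F := (homothety a)⁻¹ * n
  have hm : (m : Equiv.Perm (PG1 F)) * g ∈ PSigmaLsub F := by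
    refine mem_PSigmaLsub_of_smul_eq_self h2 hc hsq
      (mul_mem (Subgroup.le_normalizer m.2) hg) ?_ ?_ ?_
    · change (homothety a)⁻¹ • n • g (infty F) = infty F
      rw [hninf, inv_smul_eq_iff, homothety_smul_infty]
    · change (homothety a)⁻¹ • n • g (affine 0) = affine 0
      rw [hn0, inv_smul_eq_iff, homothety_smul_affine_zero]
    · rw [mul_smul]
      change ((homothety a)⁻¹ * n) • g • B = B
      rw [mul_smul, ← ha, inv_smul_smul]
  exact (Subgroup.mul_mem_cancel_left _ (PSLsub_le_PSigmaLsub m.2)).1 hm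

end SemilinearNormalizer

section LineDesigns

variable {F : Type} [Field F] [Finite F] {𝓑 : Set (Set (PG1 F))} {k lam : ℕ} {B : Set (PG1 F)}

lemma IsDesign.parameters_of_mem_blocksThrough (hD : IsDesign 𝓑 k 3) (hk : 2 < k)
    (hkF : k < Nat.card F) (hdvd : k - 1 ∣ Nat.card F) (hacts : ActsOn (PSLsub F) 𝓑)
    (hB : B ∈ blocksThrough 𝓑 (infty F) (affine 0)) :
    (Nat.card F = 4 ∧ k = 3) ∨
      (Nat.card F = 25 ∧ k = 6 ∧ (MulAction.orbit (homothety (F := F)).range B).ncard = 3) := by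
  have horbit : 1 ≤ (MulAction.orbit (homothety (F := F)).range B).ncard :=
    (MulAction.nonempty_orbit B).ncard_pos
  have hgcd := card_sub_one_dvd_gcd_mul hB.2.1 hB.2.2
  have hblocks := hD.card_blocks_mul (by omega)
  rw [hD.block_card B hB.1] at hgcd
  rw [card_PG1, Nat.add_sub_cancel] at hblocks
  obtain ⟨u, rfl⟩ : ∃ u, k = u + 1 := ⟨k - 1, by omega⟩
  obtain ⟨s, hs⟩ := hdvd
  rw [Nat.add_sub_cancel, mul_comm] at hs
  have hs2 : 2 ≤ s := by
    by_contra! hs1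
    have : s * u ≤ 1 * u := Nat.mul_le_mul_right u (by omega)
    omega
  rw [hs] at hgcd hblocks ⊢
  rcases eq_of_mul_sub_one_dvd_gcd_mul hs2 (by omega) horbit
    (hD.ncard_orbit_homothety_le hacts hB) hgcd with h | h | h <;> obtain ⟨rfl, rfl, he⟩ := h
  · exact Or.inl ⟨rfl, rfl⟩
  · -- a `2-(10,4,3)` design would have `45 / 2` blocks
    omega
  · exact Or.inr ⟨rfl, rfl, he⟩

lemma IsDesign.exists_baerSubline_orbit {p : ℕ} [Fact p.Prime] (hF : Nat.card F = p ^ 2)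
    (hD : IsDesign 𝓑 (p + 1) lam) (hacts : ActsOn (PSLsub F) 𝓑)
    (hB : B ∈ blocksThrough 𝓑 (infty F) (affine 0))
    (horbit : (MulAction.orbit (homothety (F := F)).range B).ncard = lam)
    (hlam : 2 * lam = p + 1) :
    Nat.card (⊥ : Subfield F) = p ∧ IsBaerSubline F ⊥ B ∧
      (∀ C, C ∈ 𝓑 ↔ C ∈ MulAction.orbit (PSLsub F) B) ∧
      ∀ g ∈ Subgroup.normalizer (PSLsub F : Set (Equiv.Perm (PG1 F))),
        g • B ∈ 𝓑 → g ∈ PSigmaLsub F := by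
  have := Fintype.ofFinite F
  have : CharP F p := charP_of_card_eq_prime_pow (Nat.card_eq_fintype_card.symm.trans hF)
  have hchar : ringChar F ≠ 2 := by
    rw [ringChar.eq F p]
    omega
  obtain ⟨c, hc, hcB⟩ := exists_smul_range_powMonoidHom_eq_unitsOf hF (by rw [horbit, hlam])
    (hD.block_card B hB.1) hB.2.1 hB.2.2
  have hsq : ∀ a ∈ unitsOf B, IsSquare (a / c) := by
    rw [← hcB]
    rintro _ ⟨_, ⟨b, rfl⟩, rfl⟩
    refine ⟨b ^ lam, ?_⟩
    change c * b ^ (p + 1) / c = _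
    rw [mul_div_cancel_left, ← hlam, two_mul, pow_add]
  exact ⟨Subfield.card_bot F p, isBaerSubline_bot_of_smul_range_eq_unitsOf hF hB.2.1 hB.2.2 hcB,
    hD.mem_iff_mem_orbit (Nat.lt_add_of_pos_left (Fact.out : p.Prime).pos) hacts hB horbit.ge,
    fun g hg hgB => hD.mem_PSigmaLsub hacts hB horbit.ge hchar hc hsq hg hgB⟩

end LineDesigns

section Transport

variable {G P Q : Type*} [Group G] [MulAction G P]

variable (G) in
/-- The permutation representation of `G` on `Q` obtained from its action on `P` by transport along
a bijection `e : P ≃ Q`. -/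
def transportHom (e : P ≃ Q) : G →* Equiv.Perm Q :=
  e.permCongrHom.toMonoidHom.comp (MulAction.toPermHom G P)

lemma transportHom_apply (e : P ≃ Q) (g : G) (x : P) : transportHom G e g (e x) = e (g • x) :=
  congrArg (fun y => e (g • y)) (e.symm_apply_apply x)

lemma transportHom_injective [FaithfulSMul G P] (e : P ≃ Q) :
    Function.Injective (transportHom G e) :=
  e.permCongrHom.injective.comp MulAction.toPerm_injective

lemma transportHom_smul_image (e : P ≃ Q) (g : G) (B : Set P) :
    transportHom G e g • e '' B = e '' (g • B) :=
  (Set.image_image _ _ _).trans <| (Set.image_congr fun x _ => transportHom_apply e g x).trans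
    (Set.image_image _ _ _).symm

lemma map_transportHom_eq {X : Subgroup G} {Y : Subgroup (Equiv.Perm Q)} {ι : X ≃* Y} {e : P ≃ Q}
    (he : ∀ (x : X) (z : P), e (x • z) = ι x • e z) : X.map (transportHom G e) = Y := by
  have hι (x : X) : transportHom G e x = ι x := by
    ext y
    obtain ⟨z, rfl⟩ := e.surjective y
    exact (transportHom_apply e (x : G) z).trans (he x z)
  refine le_antisymm ?_ fun y hy => ?_
  · rintro _ ⟨x, hx, rfl⟩
    exact (hι ⟨x, hx⟩).symm ▸ (ι ⟨x, hx⟩).2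
  · exact ⟨ι.symm ⟨y, hy⟩, (ι.symm ⟨y, hy⟩).2, by rw [hι, ι.apply_symm_apply]⟩

lemma range_transportHom_le_normalizer {X : Subgroup G} (hX : X.Normal) (e : P ≃ Q) :
    (transportHom G e).range ≤
      Subgroup.normalizer (X.map (transportHom G e) : Set (Equiv.Perm Q)) := by
  have h := Subgroup.le_normalizer_map (H := X) (transportHom G e)
  rwa [Subgroup.normalizer_eq_top, ← MonoidHom.range_eq_map] at h

lemma ActsOn.image_range_transportHom {𝓑 : Set (Set P)} (hacts : ActsOn G 𝓑) (e : P ≃ Q) :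
    ActsOn (transportHom G e).range (Set.image e '' 𝓑) := by
  rintro ⟨_, g, rfl⟩ _ ⟨B, hB, rfl⟩
  exact ⟨g • B, hacts g B hB, (transportHom_smul_image e g B).symm⟩

lemma exists_equiv_projectiveLine {F : Type} [Field F] [Finite F] [MulAction.IsPretransitive G P]
    (ι : G ≃* PSLsub F) {x : P} {z : PG1 F}
    (ψ : MulAction.stabilizer G x ≃* MulAction.stabilizer (PSLsub F) z) :
    ∃ e : P ≃ PG1 F, ∀ (g : G) (y : P), e (g • y) = ι g • e y := by
  obtain ⟨w, hw⟩ := exists_eq_stabilizer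
    (ψ.symm.trans ((MulAction.stabilizer G x).equivMapOfInjective ι.toMonoidHom ι.injective))
  exact exists_equivariant_equiv ι hw

end Transport

end FT

theorem stmt_17_general (F : Type) [Field F] [Finite F] {Pt G : Type*} [Group G] [MulAction G Pt]
    [FaithfulSMul G Pt] (𝓑 : Set (Set Pt)) (k : ℕ) (hD : IsDesign 𝓑 k 3) (hk : 2 < k)
    (hkF : k < Nat.card F) (hacts : ActsOn G 𝓑) (X : Subgroup G) (hXnormal : X.Normal)
    (hXiso : Nonempty (X ≃* PSL2 F)) (hXtrans : MulAction.IsPretransitive X Pt) (α : Pt)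
    (h3r : 3 ∣ repNum 𝓑 α)
    (hBorel : ∃ p₀ : PG1 F, Nonempty
      ((MulAction.stabilizer X α) ≃* (MulAction.stabilizer (PSLsub F) p₀))) :
    (Nat.card F = 4 ∧ ∃ e : Pt ≃ Fin 5, ∀ B : Set Pt,
        B ∈ 𝓑 ↔ (e '' B) ∈ {C : Set (Fin 5) | Nat.card C = 3}) ∨
    (Nat.card F = 25 ∧ ∃ K : Subfield F, Nat.card K = 5 ∧
      ∃ s₀ : Set (PG1 F), IsBaerSubline F K s₀ ∧
        ∃ e : Pt ≃ PG1 F,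
          (∀ B : Set Pt, B ∈ 𝓑 ↔ (e '' B) ∈ MulAction.orbit (PSLsub F) s₀) ∧
          ∃ φ : G →* Equiv.Perm (PG1 F), Function.Injective φ ∧
            Subgroup.map φ X = PSLsub F ∧ φ.range ≤ PSigmaLsub F ∧
            ∀ (g : G) (x : Pt), e (g • x) = φ g (e x)) := by
  obtain ⟨ι⟩ := hXiso
  obtain ⟨p₀, ⟨ψ⟩⟩ := hBorel
  obtain ⟨e, he⟩ := exists_equiv_projectiveLine (ι.trans (pslEquiv F)) ψ
  have hmap : X.map (transportHom G e) = PSLsub F := map_transportHom_eq he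
  have : Finite Pt := Finite.of_equiv _ e.symm
  have hcard : Nat.card Pt = Nat.card F + 1 := (Nat.card_congr e).trans card_PG1
  have hdvd : k - 1 ∣ Nat.card F := by
    simpa [hcard] using hD.dvd_card_sub_one three_pos h3r
  have hactsG := hacts.image_range_transportHom e
  have hactsX : ActsOn (PSLsub F) (Set.image e '' 𝓑) := fun n =>
    hactsG ⟨n, Subgroup.map_le_range _ X (hmap.symm ▸ n.2)⟩
  obtain ⟨B, hB⟩ := (hD.image e).exists_mem_blocksThrough three_ne_zero
  rcases (hD.image e).parameters_of_mem_blocksThrough hk hkF hdvd hactsX hB with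
    ⟨hF, rfl⟩ | ⟨hF, rfl, horbit⟩
  · have hPt : Nat.card Pt = 5 := by rw [hcard, hF]
    refine Or.inl ⟨hF, Finite.equivFinOfCardEq hPt, fun C => ?_⟩
    rw [IsDesign.mem_iff_card_eq_three (by rwa [hPt]) C, Set.mem_ofPred_eq,
      Nat.card_image_of_injective (Equiv.injective _)]
  · have : Fact (Nat.Prime 5) := ⟨Nat.prime_five⟩
    obtain ⟨hK, hBaer, horb, hnorm⟩ :=
      (hD.image e).exists_baerSubline_orbit (p := 5) hF hactsX hB horbit rfl
    refine Or.inr ⟨hF, ⊥, hK, B, hBaer, e, fun C => ?_, transportHom G e,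
      transportHom_injective e, hmap, fun g hg => ?_, fun g x => (transportHom_apply e g x).symm⟩
    · rw [← horb, e.injective.image_injective.mem_set_image]
    · exact hnorm g (hmap ▸ range_transportHom_le_normalizer hXnormal e hg) (hactsG ⟨g, hg⟩ B hB.1)

/-- In the setting of a non-trivial, non-symmetric flag-transitive,
point-primitive `2-(v,k,3)` design with `3 ∣ r`, almost simple automorphism group `G` with
socle `X ≅ PSL(2,q)` acting point-primitively with maximal point stabilizer `X_α`:
if `X_α` is (isomorphic to) the Borel subgroup `C_p^f ⋊ C_{(q−1)/gcd(2,q−1)}`, the stabilizer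
of a point in the natural action of `PSL(2,q)` on the projective line `PG(1,q)` (so that
`v = q + 1`), then either (1) `q = 4` and `D` is the complete `2-(5,3,3)` design, and
`PSL(2,4) ⊴ G ≤ PΓL(2,4)`; or (2) `q = 25` and `D` is the `2-(26,6,3)` design whose blocks
form one `PSL(2,25)`-orbit of Baer sublines `PG(1,5)` of `PG(1,25)`, and
`PSL(2,25) ⊴ G ≤ PΣL(2,25)`. -/
theorem stmt_17
    (q : ℕ) (hq4 : 4 ≤ q)
    (F : Type) [Field F] [Fintype F] (hF : Fintype.card F = q)
    {Pt : Type*} [Fintype Pt] {G : Type*} [Group G] [MulAction G Pt] [FaithfulSMul G Pt]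
    -- `D = (Pt, 𝓑)` is a non-trivial, non-symmetric `2-(v,k,3)` design …
    (𝓑 : Set (Set Pt)) (v k : ℕ) (hv : Nat.card Pt = v)
    (hD : IsDesign 𝓑 k 3) (hnt : 2 < k ∧ k < v - 1)
    (hnonsym : Nat.card 𝓑 ≠ v)
    -- … whose replication number `r` is divisible by 3, …
    (r : ℕ) (hr : ∀ x : Pt, repNum 𝓑 x = r) (h3r : 3 ∣ r)
    -- … admitting the flag-transitive, point-primitive automorphism group `G`, …
    (hacts : ActsOn G 𝓑) (hflag : FlagTransitive G 𝓑)
    (hprim : PointPrimitive G Pt)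
    -- … where `G` is almost simple with socle `X ≅ PSL(2,q)` (so `PSL(2,q) ⊴ G ≤ PΓL(2,q)`):
    (X : Subgroup G) (hXnormal : X.Normal)
    (hXiso : Nonempty (X ≃* PSL2 F))
    (hXcent : Subgroup.centralizer (X : Set G) = ⊥)
    -- `X` acts point-primitively on `D`, with maximal point stabilizer `X_α`:
    (hXprim : PointPrimitive X Pt)
    (α : Pt) (hmax : IsCoatom (MulAction.stabilizer X α))
    -- `X_α` is the stabilizer of a point in the natural action of `PSL(2,q)` on `PG(1,q)`
    -- (a Borel subgroup `C_p^f ⋊ C_{(q−1)/gcd(2,q−1)}`), so that `v = q + 1`: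
    (hBorel : ∃ p₀ : PG1 F, Nonempty
      ((MulAction.stabilizer X α) ≃* (MulAction.stabilizer (PSLsub F) p₀)))
    (hvq : v = q + 1) :
    -- (1) `q = 4` and `D` is the complete `2-(5,3,3)` design
    (q = 4 ∧ ∃ e : Pt ≃ Fin 5, ∀ B : Set Pt,
        B ∈ 𝓑 ↔ (e '' B) ∈ {C : Set (Fin 5) | Nat.card C = 3}) ∨
    -- (2) `q = 25` and `D` is the `2-(26,6,3)` design whose blocks are one
    -- `PSL(2,25)`-orbit of Baer sublines, with `PSL(2,25) ⊴ G ≤ PΣL(2,25)`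
    (q = 25 ∧ ∃ K : Subfield F, Nat.card K = 5 ∧
      ∃ s₀ : Set (PG1 F), IsBaerSubline F K s₀ ∧
        ∃ e : Pt ≃ PG1 F,
          (∀ B : Set Pt, B ∈ 𝓑 ↔ (e '' B) ∈ MulAction.orbit (PSLsub F) s₀) ∧
          ∃ φ : G →* Equiv.Perm (PG1 F), Function.Injective φ ∧
            Subgroup.map φ X = PSLsub F ∧ φ.range ≤ PSigmaLsub F ∧
            ∀ (g : G) (x : Pt), e (g • x) = φ g (e x)) := by
  obtain rfl : Nat.card F = q := Nat.card_eq_fintype_card.trans hF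
  exact stmt_17_general F 𝓑 k hD hnt.1 (by omega) hacts X hXnormal hXiso hXprim.1 α
    (hr α ▸ h3r) hBorel
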